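/- Let 0 ≠ f ∈ L²(μ). Then for all but countably many α ∈ ℝ, the function f_α = V_α f satisfies f_α(t) ≠ 0 for (μ_α)_ac-almost every t ∈ ℝ (for any Borel representative of f_α); that is, the set {α ∈ ℝ : (μ_α)_ac({t ∈ ℝ : f_α(t) = 0}) > 0} is countable. -/

import Mathlib

/-!
Let `f_α = V_α f`, let `F_α` and `K_α` be the Cauchy transforms of `μ_α` and of `f_α μ_α`, and let
`Z_α` be the set where `f_α` vanishes and `μ_α` has nonzero density. Sets that are pairwise disjoint
up to null sets have positive Lebesgue measure for countably many indices only, so it is enough that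
`Z_α ∩ Z_β` is a null set for `α ≠ β`.

The second resolvent identity for the rank-one perturbation gives `F_β W = F_α` and `K_β W = K_α`,
with `W = 1 + (β - α) F_α`. Comparing imaginary parts, `|W|² Im F_β = Im F_α`. Comparing the second
identity at `z` and `conj z`, with `D_γ = K_γ(z) - K_γ(conj z)`,
`D_α W - D_β |W|² = 2 i (β - α) (Im F_α) K_α(z)`.
As `z` tends nontangentially to almost any point of `Z_α ∩ Z_β`, `Im F_α` and `Im F_β` stay bounded
and bounded away from zero, while the jumps `D_α` and `D_β`, being Poisson integrals of `f_γ μ_γ` up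
to a constant, tend to zero. Hence `K_α → 0`.

If `Z_α ∩ Z_β` had positive measure, boundary uniqueness would force `K_α = 0`, so `f_α = 0`, and
`f = 0`. For bounded functions on the disk, boundary uniqueness follows from Jensen's formula and
Fatou's lemma. Cayley transforms carry it to the half-plane, and to functions with nonnegative
imaginary part such as the Cauchy transforms of positive measures.
-/

open MeasureTheory Complex Set

local notation "⟪" x ", " y "⟫" => @inner ℂ _ _ x y

section
open Filter Topology Metric
open scoped ComplexConjugate ENNReal NNReal InnerProductSpace

/-! ### Boundary uniqueness in the disk -/

/-- Jensen's inequality: the zeros of `g` only contribute nonnegative terms to Jensen's formula. -/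
lemma log_norm_le_circleAverage {g : ℂ → ℂ} {c : ℂ} {R : ℝ}
    (hg : AnalyticOnNhd ℂ g (closedBall c |R|)) (hR : 0 < R) (hc : g c ≠ 0) :
    Real.log ‖g c‖ ≤ Real.circleAverage (fun w => Real.log ‖g w‖) c R := by
  rw [hg.circleAverage_log_norm hR.ne' hc]
  refine le_add_of_nonneg_left (finsum_nonneg fun v => ?_)
  by_cases hv : v ∈ closedBall c |R|
  · refine mul_nonneg (mod_cast MeromorphicOn.AnalyticOnNhd.divisor_nonneg hg v) ?_
    rcases eq_or_ne c v with rfl | hcv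
    · simp
    · have hcv' : ‖c - v‖ ≤ R := by
        simpa only [abs_of_pos hR, mem_closedBall, dist_eq_norm, norm_sub_rev c v] using hv
      exact Real.log_nonneg (by
        rwa [← div_eq_mul_inv, one_le_div (norm_pos_iff.2 (sub_ne_zero.2 hcv))])
  · simp [Function.locallyFinsuppWithin.apply_eq_zero_of_notMem _ hv]

lemma lintegral_neg_log_norm_circleMap_le {g : ℂ → ℂ} {c : ℂ} {R : ℝ}
    (hg : AnalyticOnNhd ℂ g (closedBall c |R|)) (hR : 0 < R) (hc : g c ≠ 0)
    (hb : ∀ w ∈ closedBall c |R|, ‖g w‖ ≤ 1) :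
    ∫⁻ θ in Ioc 0 (2 * Real.pi), ENNReal.ofReal (-Real.log ‖g (circleMap c R θ)‖) ≤
      ENNReal.ofReal (2 * Real.pi * -Real.log ‖g c‖) := by
  have hint : IntegrableOn (fun θ => Real.log ‖g (circleMap c R θ)‖) (Ioc 0 (2 * Real.pi)) := by
    have : CircleIntegrable (fun w => Real.log ‖g w‖) c R :=
      (hg.mono sphere_subset_closedBall).meromorphicOn.circleIntegrable_log_norm
    rwa [CircleIntegrable, intervalIntegrable_iff_integrableOn_Ioc_of_le (by positivity)] at this
  have hjensen := log_norm_le_circleAverage hg hR hc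
  rw [Real.circleAverage_def, smul_eq_mul, inv_mul_eq_div, le_div_iff₀ (by positivity),
    intervalIntegral.integral_of_le (by positivity)] at hjensen
  have hnonneg (θ : ℝ) : 0 ≤ -Real.log ‖g (circleMap c R θ)‖ :=
    neg_nonneg.2 (Real.log_nonpos (norm_nonneg _)
      (hb _ (sphere_subset_closedBall (circleMap_mem_sphere' c R θ))))
  rw [← ofReal_integral_eq_lintegral_ofReal
    (f := fun θ => -Real.log ‖g (circleMap c R θ)‖) hint.neg (ae_of_all _ hnonneg), integral_neg]
  exact ENNReal.ofReal_le_ofReal (by linarith)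

lemma ae_circleMap_ne_zero {g : ℂ → ℂ} {U : Set ℂ} {c z : ℂ} {R : ℝ} (hg : AnalyticOnNhd ℂ g U)
    (hU : IsConnected U) (hz : z ∈ U) (hgz : g z ≠ 0) (hR : R ≠ 0) (hsub : sphere c |R| ⊆ U) :
    ∀ᵐ θ : ℝ, g (circleMap c R θ) ≠ 0 := by
  have h : circleMap c R ⁻¹' (g ⁻¹' {0}ᶜ) ∈ codiscrete ℝ :=
    circleMap_preimage_codiscrete hR
      (codiscreteWithin_mono hsub (hg.preimage_zero_mem_codiscreteWithin hgz hz hU))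
  have hae := ae_restrict_le_codiscreteWithin (μ := volume) MeasurableSet.univ h
  rwa [Measure.restrict_univ] at hae

/-- Boundary uniqueness: by Fatou's lemma, the bounds that Jensen's formula gives for the integrals
of `-log ‖g‖` over the circles of radius `r n` make `liminf (-log ‖g‖)` finite for almost every
angle. -/
lemma ae_not_tendsto_zero_circleMap {g : ℂ → ℂ} (hg : DifferentiableOn ℂ g (ball 0 1))
    (hb : ∀ w ∈ ball (0 : ℂ) 1, ‖g w‖ ≤ 1) (h0 : g 0 ≠ 0) {r : ℕ → ℝ}
    (hr : ∀ n, r n ∈ Ioo (0 : ℝ) 1) :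
    ∀ᵐ θ ∂volume.restrict (Ioc 0 (2 * Real.pi)),
      ¬ Tendsto (fun n => g (circleMap 0 (r n) θ)) atTop (𝓝 0) := by
  have hsub (n : ℕ) : closedBall (0 : ℂ) |r n| ⊆ ball 0 1 :=
    closedBall_subset_ball (by rw [abs_of_pos (hr n).1]; exact (hr n).2)
  have hana : AnalyticOnNhd ℂ g (ball 0 1) := hg.analyticOnNhd isOpen_ball
  let u (n : ℕ) (θ : ℝ) : ℝ≥0∞ := ENNReal.ofReal (-Real.log ‖g (circleMap 0 (r n) θ)‖)
  have hu (n : ℕ) : Measurable (u n) := by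
    have : Continuous fun θ => g (circleMap 0 (r n) θ) :=
      hg.continuousOn.comp_continuous (continuous_circleMap _ _) fun θ =>
        hsub n (sphere_subset_closedBall (circleMap_mem_sphere' _ _ _))
    exact (Real.measurable_log.comp this.norm.measurable).neg.ennreal_ofReal
  have hfatou : ∫⁻ θ in Ioc 0 (2 * Real.pi), liminf (fun n => u n θ) atTop ≤
      ENNReal.ofReal (2 * Real.pi * -Real.log ‖g 0‖) :=
    (lintegral_liminf_le hu).trans (liminf_le_of_frequently_le' (Frequently.of_forall fun n =>
      lintegral_neg_log_norm_circleMap_le (hana.mono (hsub n)) (hr n).1 h0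
        fun w hw => hb w (hsub n hw)))
  have hne : ∀ᵐ θ ∂volume.restrict (Ioc 0 (2 * Real.pi)), ∀ n, g (circleMap 0 (r n) θ) ≠ 0 :=
    ae_restrict_of_ae <| ae_all_iff.2 fun n =>
      ae_circleMap_ne_zero hana ((convex_ball (0 : ℂ) 1).isConnected ⟨0, by simp⟩)
        (mem_ball_self one_pos) h0 (hr n).1.ne' (sphere_subset_closedBall.trans (hsub n))
  filter_upwards [ae_lt_top (Measurable.liminf hu) (hfatou.trans_lt ENNReal.ofReal_lt_top).ne, hne]
    with θ hfin hne hlim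
  have htop : Tendsto (fun n => u n θ) atTop (𝓝 ⊤) := by
    refine ENNReal.tendsto_ofReal_atTop.comp (tendsto_neg_atBot_atTop.comp
      (Real.tendsto_log_nhdsGT_zero.comp (tendsto_nhdsWithin_iff.2 ⟨?_, ?_⟩)))
    · simpa using hlim.norm
    · exact Eventually.of_forall fun n => norm_pos_iff.2 (hne n)
  exact hfin.ne htop.liminf_eq

/-! ### Boundary uniqueness in the upper half-plane -/

/-- The Cayley transform of the unit disk onto the upper half-plane that sends `0` to `z₀` and `1`
to `∞`. -/
noncomputable def cayley (z₀ w : ℂ) : ℂ := (z₀ - conj z₀ * w) / (1 - w)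

/-- The Stolz angle in the upper half-plane with vertex `x` (`Complex.stolzCone` is its analogue for
the unit disk). Nontangential limits at `x` are limits along `𝓝[stolzAngle x] x`; the aperture is
wide enough to contain the ends of the images of the radii under Cayley transforms. -/
def stolzAngle (x : ℝ) : Set ℂ := {z | 0 < z.im ∧ ‖z - x‖ ≤ 2 * z.im}

lemma cayley_zero (z₀ : ℂ) : cayley z₀ 0 = z₀ := by simp [cayley]

lemma im_cayley (z₀ w : ℂ) :
    (cayley z₀ w).im = z₀.im * (1 - ‖w‖ ^ 2) / ‖1 - w‖ ^ 2 := by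
  simp only [cayley, div_im, Complex.sq_norm, normSq_apply, sub_re, sub_im, mul_re, mul_im, conj_re,
    conj_im, one_re, one_im]
  ring

lemma im_cayley_pos {z₀ w : ℂ} (hz₀ : 0 < z₀.im) (hw : ‖w‖ < 1) : 0 < (cayley z₀ w).im := by
  have hw1 : 1 - w ≠ 0 := sub_ne_zero.2 fun h => by simp [← h] at hw
  rw [im_cayley]
  have : 0 < 1 - ‖w‖ ^ 2 := sub_pos.2 (pow_lt_one₀ (norm_nonneg w) hw two_ne_zero)
  positivity

lemma ofReal_re_cayley (z₀ : ℂ) {w : ℂ} (hw : ‖w‖ = 1) :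
    ((cayley z₀ w).re : ℂ) = cayley z₀ w :=
  Complex.ext rfl (by simp [im_cayley, hw])

lemma cayley_sub_cayley (z₀ : ℂ) {w w' : ℂ} (hw : w ≠ 1) (hw' : w' ≠ 1) :
    cayley z₀ w - cayley z₀ w' = 2 * z₀.im * I * (w - w') / ((1 - w) * (1 - w')) := by
  have h : 1 - w ≠ 0 := sub_ne_zero.2 hw.symm
  have h' : 1 - w' ≠ 0 := sub_ne_zero.2 hw'.symm
  have hz₀ : z₀ - conj z₀ = 2 * z₀.im * I := by rw [sub_conj]; push_cast; rfl
  rw [cayley, cayley, div_sub_div _ _ h h', ← hz₀]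
  ring

lemma differentiableAt_cayley (z₀ : ℂ) {w : ℂ} (hw : w ≠ 1) :
    DifferentiableAt ℂ (cayley z₀) w := by
  have : 1 - w ≠ 0 := sub_ne_zero.2 hw.symm
  unfold cayley
  fun_prop (disch := assumption)

lemma exists_cayley_circleMap_eq {z₀ : ℂ} (hz₀ : 0 < z₀.im) (x : ℝ) :
    ∃ θ ∈ Ioc 0 (2 * Real.pi), circleMap 0 1 θ ≠ 1 ∧ cayley z₀ (circleMap 0 1 θ) = x := by
  have hz : z₀ - conj z₀ ≠ 0 := by
    rw [sub_conj]; simpa using hz₀.ne'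
  have hx : (x : ℂ) - conj z₀ ≠ 0 := fun h => by
    simpa [hz₀.ne'] using congr_arg im h
  have hw : (x - z₀) / (x - conj z₀) ∈ sphere (0 : ℂ) |1| := by
    have : ‖(x : ℂ) - z₀‖ = ‖(x : ℂ) - conj z₀‖ := by
      rw [← norm_conj, map_sub, conj_ofReal]
    simp [this, div_self (norm_ne_zero_iff.2 hx)]
  obtain ⟨θ, hθ, hθw⟩ := (image_circleMap_Ioc 0 1).ge hw
  have hw1 : 1 - (x - z₀) / (x - conj z₀) = (z₀ - conj z₀) / (x - conj z₀) := by
    field_simp; ring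
  refine ⟨θ, hθ, ?_, ?_⟩ <;> rw [hθw]
  · rw [ne_comm, ← sub_ne_zero, hw1]
    exact div_ne_zero hz hx
  · rw [cayley, hw1]
    field_simp
    ring

lemma tendsto_cayley_circleMap {z₀ : ℂ} (hz₀ : 0 < z₀.im) {θ : ℝ} (hθ : circleMap 0 1 θ ≠ 1) :
    Tendsto (fun r : ℝ => cayley z₀ (circleMap 0 r θ)) (𝓝[<] 1)
      (𝓝[stolzAngle (cayley z₀ (circleMap 0 1 θ)).re] ((cayley z₀ (circleMap 0 1 θ)).re : ℂ)) := by
  rw [ofReal_re_cayley z₀ (norm_circleMap_zero 1 θ |>.trans abs_one)]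
  have hcont : Continuous fun r : ℝ => circleMap 0 r θ := by unfold circleMap; fun_prop
  refine tendsto_nhdsWithin_iff.2 ⟨((differentiableAt_cayley z₀ hθ).continuousAt.comp_of_eq
    hcont.continuousAt rfl).tendsto.mono_left nhdsWithin_le_nhds, ?_⟩
  have haperture : ∀ᶠ r : ℝ in 𝓝[<] 1,
      ‖1 - circleMap 0 r θ‖ < (1 + r) * ‖1 - circleMap 0 1 θ‖ := by
    refine nhdsWithin_le_nhds (ContinuousAt.eventually_lt (by fun_prop) (by fun_prop) ?_)
    have : 0 < ‖1 - circleMap 0 1 θ‖ := norm_pos_iff.2 (sub_ne_zero.2 hθ.symm)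
    linarith
  filter_upwards [haperture, Ioo_mem_nhdsLT zero_lt_one] with r hr ⟨hr0, hr1⟩
  have hnorm : ‖circleMap 0 r θ‖ = r := (norm_circleMap_zero r θ).trans (abs_of_pos hr0)
  have hne : circleMap 0 r θ ≠ 1 := fun h => by simp [h] at hnorm; linarith
  refine ⟨im_cayley_pos hz₀ (hnorm.trans_lt hr1), ?_⟩
  have hdiff : ‖circleMap 0 r θ - circleMap 0 1 θ‖ = 1 - r := by
    have : circleMap 0 r θ - circleMap 0 1 θ = circleMap 0 (r - 1) θ := by
      simp only [circleMap_zero]; push_cast; ring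
    rw [this, norm_circleMap_zero, abs_of_neg (by linarith)]; ring
  have hpos : 0 < ‖1 - circleMap 0 r θ‖ := norm_pos_iff.2 (sub_ne_zero.2 hne.symm)
  have hpos' : 0 < ‖1 - circleMap 0 1 θ‖ := norm_pos_iff.2 (sub_ne_zero.2 hθ.symm)
  rw [ofReal_re_cayley z₀ (norm_circleMap_zero 1 θ |>.trans abs_one), cayley_sub_cayley z₀ hne hθ,
    im_cayley, norm_div, norm_mul, norm_mul, norm_mul, norm_mul, hdiff, hnorm, norm_I,
    Complex.norm_two, norm_real, Real.norm_of_nonneg hz₀.le, ← mul_div_assoc,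
    div_le_div_iff₀ (by positivity) (by positivity)]
  nlinarith [mul_le_mul_of_nonneg_left hr.le
    (show 0 ≤ 2 * z₀.im * (1 - r) * ‖1 - circleMap 0 r θ‖ by have := sub_pos.2 hr1; positivity)]

lemma volume_image_re_cayley_circleMap_eq_zero (z₀ : ℂ) {T : Set ℝ} (hT : volume T = 0)
    (hT1 : ∀ θ ∈ T, circleMap 0 1 θ ≠ 1) :
    volume ((fun θ => (cayley z₀ (circleMap 0 1 θ)).re) '' T) = 0 := by
  refine addHaar_image_eq_zero_of_differentiableOn_of_addHaar_eq_zero volume (fun θ hθ => ?_) hT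
  have h := ((differentiableAt_cayley z₀ (hT1 θ hθ)).restrictScalars ℝ).comp θ
    (differentiable_circleMap 0 1 θ)
  exact (reCLM.differentiableAt.comp θ h).differentiableWithinAt

theorem eq_zero_of_tendsto_zero_stolzAngle {H : ℂ → ℂ} {C : ℝ} {E : Set ℝ}
    (hH : DifferentiableOn ℂ H {z | 0 < z.im}) (hC : ∀ z, 0 < z.im → ‖H z‖ ≤ C)
    (hE : volume E ≠ 0) (hlim : ∀ x ∈ E, Tendsto H (𝓝[stolzAngle x] (x : ℂ)) (𝓝 0))
    {z₀ : ℂ} (hz₀ : 0 < z₀.im) : H z₀ = 0 := by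
  by_contra hne
  have hC0 : 0 < C := (norm_pos_iff.2 hne).trans_le (hC z₀ hz₀)
  have him {w : ℂ} (hw : w ∈ ball (0 : ℂ) 1) : 0 < (cayley z₀ w).im :=
    im_cayley_pos hz₀ (mem_ball_zero_iff.1 hw)
  let g (w : ℂ) : ℂ := H (cayley z₀ w) / C
  have hg : DifferentiableOn ℂ g (ball 0 1) := by
    refine (hH.comp (fun w hw => ?_) fun w hw => him hw).div_const _
    refine (differentiableAt_cayley z₀ fun h => ?_).differentiableWithinAt
    simp [h] at hw
  have hg1 (w : ℂ) (hw : w ∈ ball (0 : ℂ) 1) : ‖g w‖ ≤ 1 := by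
    rw [norm_div, norm_real, Real.norm_of_nonneg hC0.le, div_le_one hC0]
    exact hC _ (him hw)
  have hg0 : g 0 ≠ 0 := by simp [g, cayley_zero, hne, hC0.ne']
  obtain ⟨r, -, hr, hr1⟩ := exists_seq_strictMono_tendsto' (zero_lt_one' ℝ)
  let T : Set ℝ := {θ | circleMap 0 1 θ ≠ 1 ∧ θ ∈ Ioc 0 (2 * Real.pi) ∧
    Tendsto (fun n => g (circleMap 0 (r n) θ)) atTop (𝓝 0)}
  have hT : volume T = 0 := by
    have hae := (ae_restrict_iff' measurableSet_Ioc).1 (ae_not_tendsto_zero_circleMap hg hg1 hg0 hr)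
    refine measure_mono_null ?_ (ae_iff.1 hae)
    exact fun θ hθ h => h hθ.2.1 hθ.2.2
  refine hE (measure_mono_null (fun x hx => ?_)
    (volume_image_re_cayley_circleMap_eq_zero z₀ hT fun θ hθ => hθ.1))
  obtain ⟨θ, hθ, hθ1, hθx⟩ := exists_cayley_circleMap_eq hz₀ x
  refine ⟨θ, ⟨hθ1, hθ, ?_⟩, by simp [hθx]⟩
  have hr1' : Tendsto r atTop (𝓝[<] 1) :=
    tendsto_nhdsWithin_iff.2 ⟨hr1, Eventually.of_forall fun n => (hr n).2⟩
  have hcayley := (tendsto_cayley_circleMap hz₀ hθ1).comp hr1'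
  rw [hθx, ofReal_re] at hcayley
  simpa using ((hlim x hx).comp hcayley).div_const (C : ℂ)

/-- Since `‖(F + I)⁻¹‖ ≤ 1` when `0 ≤ F.im`, boundary uniqueness for bounded functions applies to
`(F₂ + I)⁻¹ - (F₁ + I)⁻¹`. -/
theorem eq_of_tendsto_sub_zero_stolzAngle {F₁ F₂ : ℂ → ℂ} {E : Set ℝ}
    (hd₁ : DifferentiableOn ℂ F₁ {z | 0 < z.im}) (hd₂ : DifferentiableOn ℂ F₂ {z | 0 < z.im})
    (him₁ : ∀ z, 0 < z.im → 0 ≤ (F₁ z).im) (him₂ : ∀ z, 0 < z.im → 0 ≤ (F₂ z).im)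
    (hE : volume E ≠ 0)
    (hlim : ∀ x ∈ E, Tendsto (fun z => F₁ z - F₂ z) (𝓝[stolzAngle x] (x : ℂ)) (𝓝 0))
    {z : ℂ} (hz : 0 < z.im) : F₁ z = F₂ z := by
  have hnorm {w : ℂ} (hw : 0 ≤ w.im) : 1 ≤ ‖w + I‖ := by
    have h := im_le_norm (w + I)
    rw [add_im, I_im] at h
    linarith
  have hne {w : ℂ} (hw : 0 ≤ w.im) : w + I ≠ 0 := norm_pos_iff.1 (one_pos.trans_le (hnorm hw))
  have hinv {w : ℂ} (hw : 0 ≤ w.im) : ‖(w + I)⁻¹‖ ≤ 1 := by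
    rw [norm_inv]; exact inv_le_one_of_one_le₀ (hnorm hw)
  let H (z : ℂ) : ℂ := (F₂ z + I)⁻¹ - (F₁ z + I)⁻¹
  have hH (z : ℂ) (hz : 0 < z.im) : H z = (F₁ z - F₂ z) * ((F₂ z + I)⁻¹ * (F₁ z + I)⁻¹) := by
    have h₁ := hne (him₁ z hz)
    have h₂ := hne (him₂ z hz)
    simp only [H]
    field_simp
    ring
  have hzero : H z = 0 := by
    refine eq_zero_of_tendsto_zero_stolzAngle (C := 1 + 1) (fun w hw => ?_) (fun w hw => ?_) hE
      (fun x hx => ?_) hz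
    · exact (((hd₂ w hw).add_const I).inv (hne (him₂ w hw))).sub
        (((hd₁ w hw).add_const I).inv (hne (him₁ w hw)))
    · exact (norm_sub_le _ _).trans (add_le_add (hinv (him₂ w hw)) (hinv (him₁ w hw)))
    · refine squeeze_zero_norm' ?_ (tendsto_zero_iff_norm_tendsto_zero.1 (hlim x hx))
      filter_upwards [self_mem_nhdsWithin] with w hw
      rw [hH w hw.1, norm_mul, norm_mul]
      exact mul_le_of_le_one_right (norm_nonneg _)
        (mul_le_one₀ (hinv (him₂ w hw.1)) (norm_nonneg _) (hinv (him₁ w hw.1)))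
  rw [hH z hz, mul_eq_zero, or_iff_left (mul_ne_zero (inv_ne_zero (hne (him₂ z hz)))
    (inv_ne_zero (hne (him₁ z hz))))] at hzero
  exact sub_eq_zero.1 hzero

/-! ### Cauchy transforms -/

section CauchyTransform

/-- The Cauchy transform of the complex measure `φ ν`. The Cauchy transform of `ν` itself, which a
probabilist calls its Stieltjes transform, is `cauchyTransform ν 1`. -/
noncomputable def cauchyTransform (ν : Measure ℝ) (φ : ℝ → ℂ) (z : ℂ) : ℂ :=
  ∫ t, φ t * ((t : ℂ) - z)⁻¹ ∂ν

/-- The Poisson integral of `ν` at a point of the upper half-plane, without the usual factor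
`1 / π`. -/
noncomputable def poissonIntegral (ν : Measure ℝ) (z : ℂ) : ℝ :=
  ∫ t : ℝ, z.im / ‖(t : ℂ) - z‖ ^ 2 ∂ν

lemma abs_im_le_norm_ofReal_sub (t : ℝ) (z : ℂ) : |z.im| ≤ ‖(t : ℂ) - z‖ := by
  simpa using abs_im_le_norm ((t : ℂ) - z)

lemma ofReal_sub_ne_zero (t : ℝ) {z : ℂ} (hz : z.im ≠ 0) : (t : ℂ) - z ≠ 0 :=
  norm_pos_iff.1 ((abs_pos.2 hz).trans_le (abs_im_le_norm_ofReal_sub t z))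

lemma continuous_inv_ofReal_sub {z : ℂ} (hz : z.im ≠ 0) :
    Continuous fun t : ℝ => ((t : ℂ) - z)⁻¹ :=
  (continuous_ofReal.sub continuous_const).inv₀ fun t => ofReal_sub_ne_zero t hz

lemma norm_inv_ofReal_sub_le {z : ℂ} (hz : z.im ≠ 0) (t : ℝ) : ‖((t : ℂ) - z)⁻¹‖ ≤ |z.im|⁻¹ := by
  rw [norm_inv]
  exact inv_anti₀ (abs_pos.2 hz) (abs_im_le_norm_ofReal_sub t z)

lemma im_inv_ofReal_sub (t : ℝ) (z : ℂ) : ((t : ℂ) - z)⁻¹.im = z.im / ‖(t : ℂ) - z‖ ^ 2 := by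
  rw [inv_im, normSq_eq_norm_sq]; simp

variable {ν : Measure ℝ}

lemma integrable_mul_inv_ofReal_sub {φ : ℝ → ℂ} (hφ : Integrable φ ν) {z : ℂ}
    (hz : z.im ≠ 0) : Integrable (fun t : ℝ => φ t * ((t : ℂ) - z)⁻¹) ν :=
  hφ.mul_bdd (continuous_inv_ofReal_sub hz).aestronglyMeasurable
    (ae_of_all _ (norm_inv_ofReal_sub_le hz))

lemma cauchyTransform_conj (ν : Measure ℝ) (φ : ℝ → ℂ) (z : ℂ) :
    cauchyTransform ν (fun t => conj (φ t)) z = conj (cauchyTransform ν φ (conj z)) := by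
  simp only [cauchyTransform, ← integral_conj, map_mul, map_inv₀, map_sub, conj_ofReal, conj_conj]

lemma cauchyTransform_congr {φ ψ : ℝ → ℂ} (h : φ =ᵐ[ν] ψ) (z : ℂ) :
    cauchyTransform ν φ z = cauchyTransform ν ψ z :=
  integral_congr_ae (h.mono fun t ht => by simp only [ht])

lemma cauchyTransform_add {φ ψ : ℝ → ℂ} (hφ : Integrable φ ν) (hψ : Integrable ψ ν) {z : ℂ}
    (hz : z.im ≠ 0) :
    cauchyTransform ν (fun t => φ t + ψ t) z = cauchyTransform ν φ z + cauchyTransform ν ψ z := by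
  simp only [cauchyTransform, add_mul]
  exact integral_add (integrable_mul_inv_ofReal_sub hφ hz) (integrable_mul_inv_ofReal_sub hψ hz)

lemma cauchyTransform_const_mul (ν : Measure ℝ) (c : ℂ) (φ : ℝ → ℂ) (z : ℂ) :
    cauchyTransform ν (fun t => c * φ t) z = c * cauchyTransform ν φ z := by
  simp only [cauchyTransform, mul_assoc, integral_const_mul]

lemma im_cauchyTransform_ofReal {h : ℝ → ℝ} (hh : Integrable h ν) {z : ℂ} (hz : z.im ≠ 0) :
    (cauchyTransform ν (fun t => h t) z).im = ∫ t, h t * (z.im / ‖(t : ℂ) - z‖ ^ 2) ∂ν := by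
  have hint := integrable_mul_inv_ofReal_sub (φ := fun t => (h t : ℂ)) hh.ofReal hz
  rw [cauchyTransform, ← imCLM_apply, ← imCLM.integral_comp_comm hint]
  simp only [imCLM_apply, im_ofReal_mul, im_inv_ofReal_sub]

lemma im_cauchyTransform_ofReal_nonneg {h : ℝ → ℝ} (hh : Integrable h ν) (h0 : ∀ t, 0 ≤ h t) {z : ℂ}
    (hz : 0 < z.im) : 0 ≤ (cauchyTransform ν (fun t => h t) z).im := by
  rw [im_cauchyTransform_ofReal hh hz.ne']
  exact integral_nonneg fun t => mul_nonneg (h0 t) (by positivity)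

lemma im_cauchyTransform_one (ν : Measure ℝ) [IsFiniteMeasure ν] {z : ℂ} (hz : z.im ≠ 0) :
    (cauchyTransform ν 1 z).im = poissonIntegral ν z := by
  simpa [poissonIntegral, Pi.one_def] using
    im_cauchyTransform_ofReal (ν := ν) (integrable_const (1 : ℝ)) hz

lemma differentiableAt_cauchyTransform {φ : ℝ → ℂ} (hφ : Integrable φ ν) {z : ℂ} (hz : z.im ≠ 0) :
    DifferentiableAt ℂ (cauchyTransform ν φ) z := by
  have hpos : 0 < |z.im| / 2 := half_pos (abs_pos.2 hz)
  have him {w : ℂ} (hw : w ∈ ball z (|z.im| / 2)) : |z.im| / 2 ≤ |w.im| := by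
    have h := (abs_im_le_norm (z - w)).trans_lt (by rwa [mem_ball', dist_eq_norm] at hw)
    rw [sub_im] at h
    linarith [abs_sub_abs_le_abs_sub z.im w.im]
  have hne {w : ℂ} (hw : w ∈ ball z (|z.im| / 2)) : w.im ≠ 0 := abs_pos.1 (hpos.trans_le (him hw))
  have hmeas {w : ℂ} (hw : w ∈ ball z (|z.im| / 2)) :
      AEStronglyMeasurable (fun t : ℝ => φ t * ((t : ℂ) - w)⁻¹) ν :=
    (integrable_mul_inv_ofReal_sub hφ (hne hw)).aestronglyMeasurable
  refine (hasDerivAt_integral_of_dominated_loc_of_deriv_le (𝕜 := ℂ) (ball_mem_nhds z hpos)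
    (F' := fun w t => φ t * ((t : ℂ) - w)⁻¹ ^ 2) (bound := fun t => ‖φ t‖ * (|z.im| / 2)⁻¹ ^ 2)
    (eventually_of_mem (ball_mem_nhds z hpos) fun w => hmeas)
    (integrable_mul_inv_ofReal_sub hφ hz) ?_ (ae_of_all _ fun t w hw => ?_) (hφ.norm.mul_const _)
    (ae_of_all _ fun t w hw => ?_)).2.differentiableAt
  · exact hφ.aestronglyMeasurable.mul ((continuous_inv_ofReal_sub hz).pow 2).aestronglyMeasurable
  · rw [norm_mul, norm_pow]
    gcongr
    exact (norm_inv_ofReal_sub_le (hne hw) t).trans (inv_anti₀ hpos (him hw))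
  · have := (((hasDerivAt_id w).const_sub (t : ℂ)).inv (ofReal_sub_ne_zero t (hne hw))).const_mul
      (φ t)
    simpa [inv_pow] using this

lemma integral_poissonKernel_mul (g : ℝ → ℝ) (t : ℝ) {y : ℝ} (hy : 0 < y) :
    ∫ x : ℝ, y / ‖(t : ℂ) - (x + y * I)‖ ^ 2 * g x = ∫ u : ℝ, (1 + u ^ 2)⁻¹ * g (t - y * u) := by
  have hsubst := Measure.integral_comp_mul_left
    (fun v : ℝ => y / ‖(t : ℂ) - ((t - v : ℝ) + y * I)‖ ^ 2 * g (t - v)) y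
  rw [integral_sub_left_eq_self (fun x : ℝ => y / ‖(t : ℂ) - (x + y * I)‖ ^ 2 * g x),
    abs_of_pos (inv_pos.2 hy), smul_eq_mul, inv_mul_eq_div, eq_div_iff hy.ne', ← integral_mul_const]
    at hsubst
  rw [← hsubst]
  refine integral_congr_ae (ae_of_all _ fun u => ?_)
  have hnorm : ‖(t : ℂ) - ((t - y * u : ℝ) + y * I)‖ ^ 2 = y ^ 2 * (1 + u ^ 2) := by
    rw [Complex.sq_norm, normSq_apply]
    simp
    ring
  have : 0 < 1 + u ^ 2 := by positivity
  simp only [hnorm]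
  field_simp

lemma integral_im_cauchyTransform_mul [SFinite ν] {h g : ℝ → ℝ} (hh : Integrable h ν)
    (hg : Integrable g) {y : ℝ} (hy : 0 < y) :
    ∫ x : ℝ, (cauchyTransform ν (fun t => h t) (x + y * I)).im * g x =
      ∫ t, h t * (∫ u : ℝ, (1 + u ^ 2)⁻¹ * g (t - y * u)) ∂ν := by
  let k (t x : ℝ) : ℝ := y / ‖(t : ℂ) - (x + y * I)‖ ^ 2
  have him (x : ℝ) : (x + y * I : ℂ).im = y := by simp
  have hnorm (t x : ℝ) : y ≤ ‖(t : ℂ) - (x + y * I)‖ := by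
    simpa only [him, abs_of_pos hy] using abs_im_le_norm_ofReal_sub t (x + y * I)
  have hk : Continuous (Function.uncurry k) := by
    refine continuous_const.div (by fun_prop) fun p => ?_
    exact pow_ne_zero 2 (hy.trans_le (hnorm p.1 p.2)).ne'
  have hk_le (p : ℝ × ℝ) : ‖Function.uncurry k p‖ ≤ y / y ^ 2 := by
    have hk_nonneg : 0 ≤ k p.1 p.2 := by positivity
    rw [Function.uncurry, Real.norm_of_nonneg hk_nonneg]
    exact div_le_div_of_nonneg_left hy.le (by positivity) (pow_le_pow_left₀ hy.le (hnorm _ _) 2)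
  have hint : Integrable (Function.uncurry fun t x => h t * (k t x * g x)) (ν.prod volume) := by
    refine ((hh.mul_prod hg).bdd_mul hk.aestronglyMeasurable (ae_of_all _ hk_le)).congr
      (ae_of_all _ fun p => ?_)
    simp only [Function.uncurry]
    ring
  calc ∫ x : ℝ, (cauchyTransform ν (fun t => h t) (x + y * I)).im * g x
      = ∫ x, ∫ t, h t * (k t x * g x) ∂ν := by
        refine integral_congr_ae (ae_of_all _ fun x => ?_)
        simp only [im_cauchyTransform_ofReal hh (him x ▸ hy.ne'), him, ← integral_mul_const,
          mul_assoc, k]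
    _ = ∫ t, (∫ x, h t * (k t x * g x)) ∂ν := integral_integral_swap hint |>.symm
    _ = ∫ t, h t * (∫ u : ℝ, (1 + u ^ 2)⁻¹ * g (t - y * u)) ∂ν := by
        simp only [integral_const_mul, k, fun t => integral_poissonKernel_mul g t hy]

lemma norm_integral_inv_one_add_sq_mul_le {g : ℝ → ℝ} {B : ℝ} (hB : ∀ x, ‖g x‖ ≤ B) (t y : ℝ) :
    ‖∫ u : ℝ, (1 + u ^ 2)⁻¹ * g (t - y * u)‖ ≤ Real.pi * B := by
  calc ‖∫ u : ℝ, (1 + u ^ 2)⁻¹ * g (t - y * u)‖ ≤ ∫ u : ℝ, (1 + u ^ 2)⁻¹ * B := by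
        refine norm_integral_le_of_norm_le (integrable_inv_one_add_sq.mul_const B)
          (ae_of_all _ fun u => ?_)
        rw [norm_mul, Real.norm_of_nonneg (by positivity)]
        gcongr
        exact hB _
    _ = Real.pi * B := by rw [integral_mul_const, integral_univ_inv_one_add_sq]

lemma tendsto_integral_inv_one_add_sq_mul {g : ℝ → ℝ} {B : ℝ} (hg : Continuous g)
    (hB : ∀ x, ‖g x‖ ≤ B) (t : ℝ) :
    Tendsto (fun y : ℝ => ∫ u : ℝ, (1 + u ^ 2)⁻¹ * g (t - y * u)) (𝓝 0)
      (𝓝 (Real.pi * g t)) := by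
  rw [← integral_univ_inv_one_add_sq, ← integral_mul_const]
  refine tendsto_integral_filter_of_dominated_convergence (fun u => (1 + u ^ 2)⁻¹ * B) ?_ ?_
    (integrable_inv_one_add_sq.mul_const B) (ae_of_all _ fun u => ?_)
  · exact Eventually.of_forall fun y => integrable_inv_one_add_sq.aestronglyMeasurable.mul
      (by fun_prop : Continuous fun u => g (t - y * u)).aestronglyMeasurable
  · refine Eventually.of_forall fun y => ae_of_all _ fun u => ?_
    rw [norm_mul, Real.norm_of_nonneg (by positivity)]
    gcongr
    exact hB _
  · exact ((by fun_prop : Continuous fun y => g (t - y * u)).tendsto' 0 _ (by simp)).const_mul _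

/-- Stieltjes inversion. -/
theorem tendsto_integral_im_cauchyTransform_mul [SFinite ν] {h g : ℝ → ℝ} (hh : Integrable h ν)
    (hg : Continuous g) (hgc : HasCompactSupport g) :
    Tendsto (fun y : ℝ => ∫ x : ℝ, (cauchyTransform ν (fun t => h t) (x + y * I)).im * g x)
      (𝓝[>] 0) (𝓝 (∫ t, h t * (Real.pi * g t) ∂ν)) := by
  obtain ⟨B, hB⟩ := hgc.exists_bound_of_continuous hg
  have hmeas (y : ℝ) :
      AEStronglyMeasurable (fun t => ∫ u : ℝ, (1 + u ^ 2)⁻¹ * g (t - y * u)) ν := by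
    have : StronglyMeasurable (Function.uncurry fun t u : ℝ => (1 + u ^ 2)⁻¹ * g (t - y * u)) :=
      (Measurable.mul (by fun_prop) (hg.measurable.comp (by fun_prop))).stronglyMeasurable
    exact this.integral_prod_right.aestronglyMeasurable
  have hlim : Tendsto (fun y : ℝ => ∫ t, h t * (∫ u : ℝ, (1 + u ^ 2)⁻¹ * g (t - y * u)) ∂ν)
      (𝓝 0) (𝓝 (∫ t, h t * (Real.pi * g t) ∂ν)) := by
    refine tendsto_integral_filter_of_dominated_convergence (fun t => ‖h t‖ * (Real.pi * B))
      (Eventually.of_forall fun y => hh.aestronglyMeasurable.mul (hmeas y))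
      (Eventually.of_forall fun y => ae_of_all _ fun t => ?_) (hh.norm.mul_const _)
      (ae_of_all _ fun t => (tendsto_integral_inv_one_add_sq_mul hg hB t).const_mul _)
    rw [norm_mul]
    gcongr
    exact norm_integral_inv_one_add_sq_mul_le hB t y
  refine (hlim.mono_left nhdsWithin_le_nhds).congr' ?_
  filter_upwards [self_mem_nhdsWithin] with y hy
  exact (integral_im_cauchyTransform_mul hh (hg.integrable_of_hasCompactSupport hgc) hy).symm

theorem ae_eq_zero_of_cauchyTransform_eq_zero [SFinite ν] {h : ℝ → ℝ} (hh : Integrable h ν)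
    (hzero : ∀ z : ℂ, 0 < z.im → cauchyTransform ν (fun t => h t) z = 0) : h =ᵐ[ν] 0 := by
  refine ae_eq_zero_of_integral_contDiff_smul_eq_zero hh.locallyIntegrable fun g hg hgc => ?_
  have hlim := tendsto_integral_im_cauchyTransform_mul hh hg.continuous hgc
  have hlim0 : Tendsto (fun y : ℝ =>
      ∫ x : ℝ, (cauchyTransform ν (fun t => h t) (x + y * I)).im * g x) (𝓝[>] 0) (𝓝 0) := by
    refine tendsto_const_nhds.congr' ?_
    filter_upwards [self_mem_nhdsWithin] with y (hy : 0 < y)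
    simp [hzero _ (show 0 < ((_ : ℝ) + y * I : ℂ).im by simpa using hy)]
  have hpi := tendsto_nhds_unique hlim hlim0
  simp only [mul_left_comm (h _), integral_const_mul] at hpi
  simpa [mul_comm, Real.pi_ne_zero] using hpi

theorem ae_eq_zero_of_tendsto_cauchyTransform_ofReal [SFinite ν] {h : ℝ → ℝ} (hh : Integrable h ν)
    {E : Set ℝ} (hE : volume E ≠ 0)
    (hlim : ∀ x ∈ E, Tendsto (cauchyTransform ν (fun t => h t)) (𝓝[stolzAngle x] (x : ℂ)) (𝓝 0)) :
    h =ᵐ[ν] 0 := by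
  have hsub {z : ℂ} (hz : 0 < z.im) : cauchyTransform ν (fun t => h t) z =
      cauchyTransform ν (fun t => (max (h t) 0 : ℝ)) z -
        cauchyTransform ν (fun t => (max (-h t) 0 : ℝ)) z := by
    rw [eq_sub_iff_add_eq, ← cauchyTransform_add (φ := fun t => (h t : ℂ))
      (ψ := fun t => ((max (-h t) 0 : ℝ) : ℂ)) hh.ofReal hh.neg_part.ofReal hz.ne']
    congr! 2 with t
    rw [← ofReal_add]
    congr 1
    rcases le_total (h t) 0 with ht | ht <;> simp [ht]
  refine ae_eq_zero_of_cauchyTransform_eq_zero hh fun z hz => ?_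
  rw [hsub hz, sub_eq_zero]
  refine eq_of_tendsto_sub_zero_stolzAngle (E := E)
    (fun w hw => (differentiableAt_cauchyTransform hh.pos_part.ofReal
      (ne_of_gt hw)).differentiableWithinAt)
    (fun w hw => (differentiableAt_cauchyTransform hh.neg_part.ofReal
      (ne_of_gt hw)).differentiableWithinAt)
    (fun w hw => im_cauchyTransform_ofReal_nonneg hh.pos_part (fun t => le_max_right _ _) hw)
    (fun w hw => im_cauchyTransform_ofReal_nonneg hh.neg_part (fun t => le_max_right _ _) hw)
    hE (fun x hx => (hlim x hx).congr' ?_) hz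
  filter_upwards [self_mem_nhdsWithin] with w hw using hsub hw.1

lemma cauchyTransform_re {φ : ℝ → ℂ} (hφ : Integrable φ ν) {z : ℂ} (hz : z.im ≠ 0) :
    cauchyTransform ν (fun t => ((φ t).re : ℂ)) z =
      2⁻¹ * (cauchyTransform ν φ z + conj (cauchyTransform ν φ (conj z))) := by
  have hconj : Integrable (fun t => conj (φ t)) ν :=
    (LinearIsometryEquiv.integrable_comp_iff conjLIE).2 hφ
  rw [← cauchyTransform_conj, ← cauchyTransform_add hφ hconj hz, ← cauchyTransform_const_mul]
  simp only [add_conj, ofReal_mul, ofReal_ofNat, inv_mul_cancel_left₀ (two_ne_zero' ℂ)]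

lemma re_ae_eq_zero_of_tendsto_cauchyTransform [SFinite ν] {φ : ℝ → ℂ} (hφ : Integrable φ ν)
    {E : Set ℝ} (hE : volume E ≠ 0)
    (hlim : ∀ x ∈ E, Tendsto (cauchyTransform ν φ) (𝓝[stolzAngle x] (x : ℂ)) (𝓝 0))
    (hlim' : ∀ x ∈ E,
      Tendsto (fun z => cauchyTransform ν φ (conj z)) (𝓝[stolzAngle x] (x : ℂ)) (𝓝 0)) :
    (fun t => (φ t).re) =ᵐ[ν] 0 := by
  refine ae_eq_zero_of_tendsto_cauchyTransform_ofReal hφ.re hE fun x hx => ?_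
  have h := ((hlim x hx).add ((continuous_conj.tendsto 0).comp (hlim' x hx))).const_mul (2⁻¹ : ℂ)
  rw [map_zero, add_zero, mul_zero] at h
  refine h.congr' ?_
  filter_upwards [self_mem_nhdsWithin] with z hz using (cauchyTransform_re hφ hz.1.ne').symm

theorem ae_eq_zero_of_tendsto_cauchyTransform [SFinite ν] {φ : ℝ → ℂ} (hφ : Integrable φ ν)
    {E : Set ℝ} (hE : volume E ≠ 0)
    (hlim : ∀ x ∈ E, Tendsto (cauchyTransform ν φ) (𝓝[stolzAngle x] (x : ℂ)) (𝓝 0))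
    (hlim' : ∀ x ∈ E,
      Tendsto (fun z => cauchyTransform ν φ (conj z)) (𝓝[stolzAngle x] (x : ℂ)) (𝓝 0)) :
    φ =ᵐ[ν] 0 := by
  have hre := re_ae_eq_zero_of_tendsto_cauchyTransform hφ hE hlim hlim'
  have hmul := funext (cauchyTransform_const_mul ν (-I) φ)
  have him := re_ae_eq_zero_of_tendsto_cauchyTransform (hφ.const_mul (-I)) hE
    (fun x hx => by simpa only [hmul, mul_zero] using (hlim x hx).const_mul (-I))
    (fun x hx => by simpa only [hmul, mul_zero] using (hlim' x hx).const_mul (-I))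
  filter_upwards [hre, him] with t hre him
  exact Complex.ext hre (by simpa using him)

end CauchyTransform

/-! ### Boundary behaviour of Poisson integrals -/

/-- `ν` has (symmetric) density `L` at `x` with respect to Lebesgue measure. -/
def HasDensityAt (ν : Measure ℝ) (x : ℝ) (L : ℝ≥0∞) : Prop :=
  Tendsto (fun r => ν (closedBall x r) / volume (closedBall x r)) (𝓝[>] 0) (𝓝 L)

lemma ae_hasDensityAt_rnDeriv (ν : Measure ℝ) [IsLocallyFiniteMeasure ν] :
    ∀ᵐ x, HasDensityAt ν x (ν.rnDeriv volume x) :=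
  Besicovitch.ae_tendsto_rnDeriv ν volume

lemma tendsto_im_stolzAngle (x : ℝ) : Tendsto im (𝓝[stolzAngle x] (x : ℂ)) (𝓝[>] 0) := by
  refine tendsto_nhdsWithin_iff.2 ⟨?_, eventually_mem_nhdsWithin.mono fun z hz => hz.1⟩
  simpa using (continuous_im.tendsto (x : ℂ)).mono_left (nhdsWithin_le_nhds (s := stolzAngle x))

lemma abs_norm_sub_le_of_mem_stolzAngle {x : ℝ} {z : ℂ} (hz : z ∈ stolzAngle x) (t : ℝ) :
    |‖(t : ℂ) - z‖ - ‖t - x‖| ≤ 2 * z.im := by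
  have h := abs_norm_sub_norm_le ((t : ℂ) - z) (t - x)
  rw [sub_sub_sub_cancel_left, ← ofReal_sub, norm_real] at h
  exact h.trans ((norm_sub_rev _ _).trans_le hz.2)

lemma im_le_norm_ofReal_sub (t : ℝ) (z : ℂ) : z.im ≤ ‖(t : ℂ) - z‖ :=
  (le_abs_self _).trans (abs_im_le_norm_ofReal_sub t z)

lemma poissonKernel_le_inv_im {z : ℂ} (hz : 0 < z.im) (t : ℝ) :
    z.im / ‖(t : ℂ) - z‖ ^ 2 ≤ z.im⁻¹ := by
  rw [show z.im⁻¹ = z.im / z.im ^ 2 by field_simp]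
  gcongr
  exact im_le_norm_ofReal_sub t z

lemma setOf_lt_poissonKernel_subset {x s : ℝ} {z : ℂ} (hz : z ∈ stolzAngle x) (hs : 0 < s) :
    {t : ℝ | s < z.im / ‖(t : ℂ) - z‖ ^ 2} ⊆ closedBall x (3 * √(z.im / s)) := by
  intro t (ht : s < z.im / ‖(t : ℂ) - z‖ ^ 2)
  have hnorm := im_le_norm_ofReal_sub t z
  have hpos := hz.1.trans_le hnorm
  rw [lt_div_iff₀ (by positivity), mul_comm, ← lt_div_iff₀ hs] at ht
  have hsqrt : ‖(t : ℂ) - z‖ ≤ √(z.im / s) := Real.le_sqrt_of_sq_le ht.le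
  rw [mem_closedBall, dist_eq_norm]
  linarith [(abs_le.1 (abs_norm_sub_le_of_mem_stolzAngle hz t)).1]

lemma lintegral_rpow_neg_half {a : ℝ} (ha : 0 ≤ a) :
    ∫⁻ s in Ioc 0 a, ENNReal.ofReal (s ^ (-(1 / 2) : ℝ)) = ENNReal.ofReal (2 * √a) := by
  have hint : IntervalIntegrable (fun s : ℝ => s ^ (-(1 / 2) : ℝ)) volume 0 a :=
    intervalIntegral.intervalIntegrable_rpow' (by norm_num)
  rw [intervalIntegrable_iff_integrableOn_Ioc_of_le ha] at hint
  rw [← ofReal_integral_eq_lintegral_ofReal hint, ← intervalIntegral.integral_of_le ha,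
    integral_rpow (Or.inl (by norm_num)), Real.sqrt_eq_rpow]
  · congr 1
    norm_num
    ring
  · filter_upwards [ae_restrict_mem measurableSet_Ioc] with s hs using Real.rpow_nonneg hs.1.le _

/-- By the layer-cake formula, since `{t | s < z.im / ‖t - z‖ ^ 2}` lies in the ball of radius
`3 * √(z.im / s)` about `x`, and is empty for `s ≥ 1 / z.im`. -/
lemma lintegral_poissonKernel_le {ν : Measure ℝ} {x : ℝ} {z : ℂ} (hz : z ∈ stolzAngle x) {C : ℝ}
    (hν : ∀ ρ : ℝ, 0 < ρ → ν (closedBall x ρ) ≤ ENNReal.ofReal (C * ρ)) :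
    ∫⁻ t : ℝ, ENNReal.ofReal (z.im / ‖(t : ℂ) - z‖ ^ 2) ∂ν ≤ ENNReal.ofReal (6 * C) := by
  have hy := hz.1
  have hnonneg (t : ℝ) : 0 ≤ z.im / ‖(t : ℂ) - z‖ ^ 2 := by positivity
  have hmeas : Measurable fun t : ℝ => z.im / ‖(t : ℂ) - z‖ ^ 2 := by fun_prop
  have hlevel (s : ℝ) (hs : s ∈ Ioi (0 : ℝ)) : ν {t : ℝ | s < z.im / ‖(t : ℂ) - z‖ ^ 2} ≤
      (Ioc 0 z.im⁻¹).indicator (fun s => ENNReal.ofReal (C * (3 * √z.im)) *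
        ENNReal.ofReal (s ^ (-(1 / 2) : ℝ))) s := by
    have hs : 0 < s := hs
    by_cases hsy : s ≤ z.im⁻¹
    · rw [indicator_of_mem (show s ∈ Ioc 0 z.im⁻¹ from ⟨hs, hsy⟩),
        ← ENNReal.ofReal_mul' (by positivity), Real.rpow_neg hs.le, ← Real.sqrt_eq_rpow]
      refine (measure_mono (setOf_lt_poissonKernel_subset hz hs)).trans
        ((hν _ (by positivity)).trans_eq ?_)
      rw [Real.sqrt_div hy.le]
      ring_nf
    · have hempty : {t : ℝ | s < z.im / ‖(t : ℂ) - z‖ ^ 2} = ∅ := by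
        refine eq_empty_of_forall_notMem fun t (ht : s < _) => ?_
        exact hsy (ht.trans_le (poissonKernel_le_inv_im hy t)).le
      simp only [hempty, measure_empty, zero_le]
  rw [lintegral_eq_lintegral_meas_lt ν (ae_of_all _ hnonneg) hmeas.aemeasurable]
  refine (setLIntegral_mono' measurableSet_Ioi hlevel).trans_eq ?_
  rw [setLIntegral_indicator measurableSet_Ioc, inter_eq_left.2 Ioc_subset_Ioi_self,
    lintegral_const_mul' _ _ ENNReal.ofReal_ne_top, lintegral_rpow_neg_half (by positivity),
    ← ENNReal.ofReal_mul' (by positivity), Real.sqrt_inv]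
  congr 1
  have : 0 < √z.im := Real.sqrt_pos.2 hy
  field_simp
  ring

lemma integrable_poissonKernel (ν : Measure ℝ) [IsFiniteMeasure ν] {z : ℂ} (hz : z.im ≠ 0) :
    Integrable (fun t : ℝ => z.im / ‖(t : ℂ) - z‖ ^ 2) ν := by
  have h := (integrable_mul_inv_ofReal_sub (integrable_const (μ := ν) (1 : ℂ)) hz).im
  simpa only [one_mul, RCLike.im_eq_complex_im, im_inv_ofReal_sub] using h

lemma setIntegral_poissonKernel_closedBall_le {ν : Measure ℝ} [IsFiniteMeasure ν] {x : ℝ} {z : ℂ}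
    (hz : z ∈ stolzAngle x) {C δ : ℝ} (hC : 0 ≤ C) (hδ : 0 < δ)
    (hν : ∀ ρ ∈ Ioc 0 δ, ν (closedBall x ρ) ≤ ENNReal.ofReal (C * ρ)) :
    ∫ t in closedBall x δ, z.im / ‖(t : ℂ) - z‖ ^ 2 ∂ν ≤ 6 * C := by
  have hy := hz.1
  rw [integral_eq_lintegral_of_nonneg_ae (ae_of_all _ fun t => by positivity)
    (integrable_poissonKernel ν hy.ne').integrableOn.1]
  refine ENNReal.toReal_le_of_le_ofReal (by positivity)
    (lintegral_poissonKernel_le hz fun ρ hρ => ?_)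
  rw [Measure.restrict_apply measurableSet_closedBall]
  rcases le_total ρ δ with hρδ | hδρ
  · exact (measure_mono inter_subset_left).trans (hν ρ ⟨hρ, hρδ⟩)
  · refine (measure_mono inter_subset_right).trans ((hν δ ⟨hδ, le_rfl⟩).trans ?_)
    gcongr

lemma setIntegral_poissonKernel_compl_closedBall_le (ν : Measure ℝ) [IsFiniteMeasure ν] {x δ : ℝ}
    {z : ℂ} (hz : z ∈ stolzAngle x) (hδ : 4 * z.im ≤ δ) :
    ∫ t in (closedBall x δ)ᶜ, z.im / ‖(t : ℂ) - z‖ ^ 2 ∂ν ≤ ν.real univ * (z.im / (δ / 2) ^ 2) := by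
  have hy := hz.1
  calc ∫ t in (closedBall x δ)ᶜ, z.im / ‖(t : ℂ) - z‖ ^ 2 ∂ν
      ≤ ∫ t in (closedBall x δ)ᶜ, z.im / (δ / 2) ^ 2 ∂ν := by
        refine setIntegral_mono_on (integrable_poissonKernel ν hy.ne').integrableOn
          (integrable_const _) measurableSet_closedBall.compl fun t ht => ?_
        rw [mem_compl_iff, mem_closedBall, dist_eq_norm, not_le] at ht
        have hδ0 : 0 < δ := by linarith
        gcongr
        linarith [(abs_le.1 (abs_norm_sub_le_of_mem_stolzAngle hz t)).1]
    _ = ν.real (closedBall x δ)ᶜ * (z.im / (δ / 2) ^ 2) := by rw [setIntegral_const, smul_eq_mul]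
    _ ≤ ν.real univ * (z.im / (δ / 2) ^ 2) :=
        mul_le_mul_of_nonneg_right (measureReal_mono (subset_univ _)) (by positivity)

theorem HasDensityAt.eventually_poissonIntegral_le {ν : Measure ℝ} [IsFiniteMeasure ν] {x : ℝ}
    {L : ℝ≥0∞} (hL : HasDensityAt ν x L) {C : ℝ} (hC : 0 < C) (hLC : L < ENNReal.ofReal C) :
    ∀ᶠ z in 𝓝[stolzAngle x] (x : ℂ), poissonIntegral ν z ≤ 13 * C := by
  obtain ⟨δ, hδ : 0 < δ, hratio⟩ :=
    mem_nhdsGT_iff_exists_Ioc_subset.1 (Tendsto.eventually_lt_const hLC hL)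
  have hball (ρ : ℝ) (hρ : ρ ∈ Ioc 0 δ) : ν (closedBall x ρ) ≤ ENNReal.ofReal (2 * C * ρ) := by
    have hlt : ν (closedBall x ρ) / volume (closedBall x ρ) < ENNReal.ofReal C := hratio hρ
    have hle := hlt.le
    rw [Real.volume_closedBall, ENNReal.div_le_iff (by simpa using hρ.1) ENNReal.ofReal_ne_top,
      ← ENNReal.ofReal_mul hC.le] at hle
    exact hle.trans_eq (by ring_nf)
  have him := (tendsto_im_stolzAngle x).mono_right nhdsWithin_le_nhds
  have hfar : Tendsto (fun z : ℂ => ν.real univ * (z.im / (δ / 2) ^ 2)) (𝓝[stolzAngle x] (x : ℂ))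
      (𝓝 0) := by
    simpa using (him.div_const ((δ / 2) ^ 2)).const_mul (ν.real univ)
  filter_upwards [him.eventually_lt_const (show 0 < δ / 4 by positivity),
    hfar.eventually_lt_const hC, self_mem_nhdsWithin] with z hzδ hzC hz
  rw [poissonIntegral, ← integral_add_compl (measurableSet_closedBall (x := x) (ε := δ))
    (integrable_poissonKernel ν hz.1.ne')]
  linarith [setIntegral_poissonKernel_closedBall_le hz (by positivity) hδ hball,
    setIntegral_poissonKernel_compl_closedBall_le ν hz (δ := δ) (by linarith)]

lemma measureReal_closedBall_div_le_poissonIntegral (ν : Measure ℝ) [IsFiniteMeasure ν] {x : ℝ}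
    {z : ℂ} (hz : z ∈ stolzAngle x) :
    ν.real (closedBall x z.im) / (9 * z.im) ≤ poissonIntegral ν z := by
  have hy := hz.1
  have hint := integrable_poissonKernel ν hy.ne'
  calc ν.real (closedBall x z.im) / (9 * z.im)
      = ∫ t in closedBall x z.im, z.im / (3 * z.im) ^ 2 ∂ν := by
        rw [setIntegral_const, smul_eq_mul]; field_simp; norm_num
    _ ≤ ∫ t in closedBall x z.im, z.im / ‖(t : ℂ) - z‖ ^ 2 ∂ν := by
        refine setIntegral_mono_on (integrable_const _) hint.integrableOn
          measurableSet_closedBall fun t ht => ?_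
        rw [mem_closedBall, dist_eq_norm] at ht
        have := hy.trans_le (im_le_norm_ofReal_sub t z)
        gcongr
        linarith [(abs_le.1 (abs_norm_sub_le_of_mem_stolzAngle hz t)).2]
    _ ≤ poissonIntegral ν z := setIntegral_le_integral hint (ae_of_all _ fun t => by positivity)

theorem HasDensityAt.exists_eventually_le_poissonIntegral {ν : Measure ℝ} [IsFiniteMeasure ν]
    {x : ℝ} {L : ℝ≥0∞} (hL : HasDensityAt ν x L) (hL0 : L ≠ 0) :
    ∃ c > 0, ∀ᶠ z in 𝓝[stolzAngle x] (x : ℂ), c ≤ poissonIntegral ν z := by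
  obtain ⟨c, hc0, hcL⟩ := ENNReal.lt_iff_exists_nnreal_btwn.1 (pos_iff_ne_zero.2 hL0)
  have hc0 : 0 < (c : ℝ) := mod_cast hc0
  refine ⟨2 * c / 9, by positivity, ?_⟩
  filter_upwards [(tendsto_im_stolzAngle x).eventually (Tendsto.eventually_const_lt hcL hL),
    self_mem_nhdsWithin] with z hratio hz
  have hy := hz.1
  refine le_trans ?_ (measureReal_closedBall_div_le_poissonIntegral ν hz)
  rw [Real.volume_closedBall] at hratio
  have hball := ENNReal.toReal_mono (measure_ne_top _ _) (ENNReal.mul_le_of_le_div hratio.le)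
  rw [ENNReal.toReal_mul, ENNReal.toReal_ofReal (by positivity), ENNReal.coe_toReal] at hball
  rw [div_le_div_iff₀ (by positivity) (by positivity), Measure.real]
  linarith

lemma norm_cauchyTransform_sub_conj_le {ν : Measure ℝ} {φ : ℝ → ℂ} (hφ : Integrable φ ν)
    (hφm : Measurable φ) {z : ℂ} (hz : 0 < z.im) :
    ‖cauchyTransform ν φ z - cauchyTransform ν φ (conj z)‖ ≤
      2 * poissonIntegral (ν.withDensity fun t => ‖φ t‖₊) z := by
  have hz' : (conj z).im ≠ 0 := by simpa using hz.ne'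
  rw [poissonIntegral, integral_withDensity_eq_integral_smul hφm.nnnorm, cauchyTransform,
    cauchyTransform, ← integral_sub (integrable_mul_inv_ofReal_sub hφ hz.ne')
      (integrable_mul_inv_ofReal_sub hφ hz'), ← integral_const_mul]
  refine (norm_integral_le_integral_norm _).trans_eq (integral_congr_ae (ae_of_all _ fun t => ?_))
  have hconj : ((t : ℂ) - conj z)⁻¹ = conj ((t : ℂ) - z)⁻¹ := by simp
  have hnonneg : 0 ≤ 2 * (z.im / ‖(t : ℂ) - z‖ ^ 2) := by positivity
  beta_reduce
  rw [← mul_sub, hconj, sub_conj, im_inv_ofReal_sub, norm_mul, norm_mul, norm_I, mul_one, norm_real,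
    Real.norm_of_nonneg hnonneg, NNReal.smul_def, coe_nnnorm, smul_eq_mul]
  ring

lemma HasDensityAt.tendsto_cauchyTransform_sub_conj {ν : Measure ℝ} {φ : ℝ → ℂ}
    (hφ : Integrable φ ν) (hφm : Measurable φ) {x : ℝ}
    (hx : HasDensityAt (ν.withDensity fun t => ‖φ t‖₊) x 0) :
    Tendsto (fun z => cauchyTransform ν φ z - cauchyTransform ν φ (conj z))
      (𝓝[stolzAngle x] (x : ℂ)) (𝓝 0) := by
  have : IsFiniteMeasure (ν.withDensity fun t => (‖φ t‖₊ : ℝ≥0∞)) :=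
    isFiniteMeasure_withDensity hφ.2.ne
  refine Metric.tendsto_nhds.2 fun ε hε => ?_
  have hle := hx.eventually_poissonIntegral_le (C := ε / 27) (by positivity) (by simpa using hε)
  filter_upwards [hle, self_mem_nhdsWithin] with z hpoisson hz
  rw [dist_zero_right]
  linarith [norm_cauchyTransform_sub_conj_le hφ hφm hz.1]

theorem ae_tendsto_cauchyTransform_sub_conj {ν : Measure ℝ} [SigmaFinite ν] {φ : ℝ → ℂ}
    (hφ : Integrable φ ν) (hφm : Measurable φ) :
    ∀ᵐ x : ℝ, φ x = 0 → Tendsto (fun z => cauchyTransform ν φ z - cauchyTransform ν φ (conj z))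
      (𝓝[stolzAngle x] (x : ℂ)) (𝓝 0) := by
  have : IsFiniteMeasure (ν.withDensity fun t => (‖φ t‖₊ : ℝ≥0∞)) :=
    isFiniteMeasure_withDensity hφ.2.ne
  filter_upwards [ae_hasDensityAt_rnDeriv (ν.withDensity fun t => ‖φ t‖₊),
    Measure.rnDeriv_withDensity_left (μ := ν) (ν := volume) (f := fun t => ‖φ t‖₊)
      hφm.nnnorm.coe_nnreal_ennreal.aemeasurable (by simp)] with x hdensity hrnDeriv hx
  rw [hrnDeriv, hx, nnnorm_zero, ENNReal.coe_zero, zero_mul] at hdensity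
  exact hdensity.tendsto_cauchyTransform_sub_conj hφ hφm

theorem ae_exists_eventually_im_cauchyTransform_one_le (ν : Measure ℝ) [IsFiniteMeasure ν] :
    ∀ᵐ x : ℝ, ∃ C, ∀ᶠ z in 𝓝[stolzAngle x] (x : ℂ), (cauchyTransform ν 1 z).im ≤ C := by
  filter_upwards [ae_hasDensityAt_rnDeriv ν, Measure.rnDeriv_lt_top ν volume] with x hdensity hlt
  have hC : ν.rnDeriv volume x < ENNReal.ofReal ((ν.rnDeriv volume x).toReal + 1) :=
    (ENNReal.lt_ofReal_iff_toReal_lt hlt.ne).2 (lt_add_one _)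
  refine ⟨13 * ((ν.rnDeriv volume x).toReal + 1), ?_⟩
  filter_upwards [hdensity.eventually_poissonIntegral_le (by positivity) hC,
    self_mem_nhdsWithin] with z hle hz
  rwa [im_cauchyTransform_one ν hz.1.ne']

theorem ae_exists_eventually_le_im_cauchyTransform_one (ν : Measure ℝ) [IsFiniteMeasure ν] :
    ∀ᵐ x : ℝ, ν.rnDeriv volume x ≠ 0 →
      ∃ c > 0, ∀ᶠ z in 𝓝[stolzAngle x] (x : ℂ), c ≤ (cauchyTransform ν 1 z).im := by
  filter_upwards [ae_hasDensityAt_rnDeriv ν] with x hdensity hx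
  obtain ⟨c, hc, hle⟩ := hdensity.exists_eventually_le_poissonIntegral hx
  refine ⟨c, hc, ?_⟩
  filter_upwards [hle, self_mem_nhdsWithin] with z hle hz
  rwa [im_cauchyTransform_one ν hz.1.ne']

/-! ### Boundary values of transforms related by a rank-one perturbation -/

lemma two_mul_abs_im_mul_norm_le {W K₁ K₁' K₂ K₂' : ℂ} (h : K₂ * W = K₁) (h' : K₂' * conj W = K₁') :
    2 * |W.im| * ‖K₁‖ ≤ ‖K₁ - K₁'‖ * ‖W‖ + ‖K₂ - K₂'‖ * ‖W‖ ^ 2 := by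
  have hkey : ((2 * W.im : ℝ) * I) * K₁ = (K₁ - K₁') * W - (K₂ - K₂') * (W * conj W) := by
    rw [← sub_conj, ← h, ← h']
    ring
  calc 2 * |W.im| * ‖K₁‖ = ‖((2 * W.im : ℝ) * I) * K₁‖ := by
        rw [norm_mul, norm_mul, norm_I, norm_real, Real.norm_eq_abs, abs_mul, abs_two, mul_one]
    _ ≤ ‖(K₁ - K₁') * W‖ + ‖(K₂ - K₂') * (W * conj W)‖ := hkey ▸ norm_sub_le _ _
    _ = ‖K₁ - K₁'‖ * ‖W‖ + ‖K₂ - K₂'‖ * ‖W‖ ^ 2 := by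
        simp only [norm_mul, RCLike.norm_conj, sq]

lemma tendsto_zero_of_tendsto_sub_zero {ι : Type*} {l : Filter ι} {W K₁ K₁' K₂ K₂' : ι → ℂ}
    (h : ∀ᶠ i in l, K₂ i * W i = K₁ i) (h' : ∀ᶠ i in l, K₂' i * conj (W i) = K₁' i)
    {c M : ℝ} (hc : 0 < c) (hcW : ∀ᶠ i in l, c ≤ |(W i).im|) (hWM : ∀ᶠ i in l, ‖W i‖ ≤ M)
    (h₁ : Tendsto (fun i => K₁ i - K₁' i) l (𝓝 0)) (h₂ : Tendsto (fun i => K₂ i - K₂' i) l (𝓝 0)) :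
    Tendsto K₁ l (𝓝 0) := by
  have hlim : Tendsto (fun i => (‖K₁ i - K₁' i‖ * M + ‖K₂ i - K₂' i‖ * M ^ 2) / (2 * c)) l
      (𝓝 0) := by
    simpa using ((h₁.norm.mul_const M).add (h₂.norm.mul_const (M ^ 2))).div_const (2 * c)
  refine squeeze_zero_norm' ?_ hlim
  filter_upwards [h, h', hcW, hWM] with i h h' hcW hWM
  rw [le_div_iff₀ (by positivity)]
  calc ‖K₁ i‖ * (2 * c) ≤ 2 * |(W i).im| * ‖K₁ i‖ := by rw [mul_comm]; gcongr
    _ ≤ ‖K₁ i - K₁' i‖ * ‖W i‖ + ‖K₂ i - K₂' i‖ * ‖W i‖ ^ 2 := two_mul_abs_im_mul_norm_le h h'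
    _ ≤ ‖K₁ i - K₁' i‖ * M + ‖K₂ i - K₂' i‖ * M ^ 2 := by gcongr

lemma im_mul_norm_one_add_sq {δ : ℝ} {F₁ F₂ : ℂ} (h : F₂ * (1 + δ * F₁) = F₁) :
    F₂.im * ‖1 + δ * F₁‖ ^ 2 = F₁.im := by
  have hmul : F₂ * (‖1 + δ * F₁‖ ^ 2 : ℝ) = F₁ + δ * (‖F₁‖ ^ 2 : ℝ) := by
    rw [← normSq_eq_norm_sq, ← normSq_eq_norm_sq, ← mul_conj, ← mul_conj, ← mul_assoc, h]
    simp only [map_add, map_one, map_mul, conj_ofReal]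
    ring
  simpa only [im_mul_ofReal, add_im, im_ofReal_mul, ofReal_im, zero_mul, mul_zero,
    add_zero] using congrArg im hmul

lemma norm_one_add_le_sqrt_div {δ c C : ℝ} {F₁ F₂ : ℂ} (h : F₂ * (1 + δ * F₁) = F₁)
    (hc : 0 < c) (h₁ : F₁.im ≤ C) (h₂ : c ≤ F₂.im) : ‖1 + δ * F₁‖ ≤ √(C / c) := by
  refine Real.le_sqrt_of_sq_le ((le_div_iff₀' hc).2 ?_)
  calc c * ‖1 + δ * F₁‖ ^ 2 ≤ F₂.im * ‖1 + δ * F₁‖ ^ 2 := by gcongr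
    _ = F₁.im := im_mul_norm_one_add_sq h
    _ ≤ C := h₁

/-- The set where `φ` vanishes and the density of `ν` does not: it is Lebesgue null if and only if
the absolutely continuous part of `ν` does not charge the zero set of `φ`. -/
def acZeroSet (ν : Measure ℝ) (φ : ℝ → ℂ) : Set ℝ := {t | ν.rnDeriv volume t ≠ 0 ∧ φ t = 0}

lemma measurableSet_acZeroSet (ν : Measure ℝ) {φ : ℝ → ℂ} (hφ : Measurable φ) :
    MeasurableSet (acZeroSet ν φ) :=
  ((Measure.measurable_rnDeriv _ _) (measurableSet_singleton 0).compl).inter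
    (hφ (measurableSet_singleton 0))

lemma withDensity_rnDeriv_pos_iff (ν : Measure ℝ) (φ : ℝ → ℂ) :
    0 < volume.withDensity (ν.rnDeriv volume) {t | φ t = 0} ↔ 0 < volume (acZeroSet ν φ) := by
  rw [pos_iff_ne_zero, pos_iff_ne_zero, Ne, Ne,
    withDensity_apply_eq_zero (Measure.measurable_rnDeriv _ _)]
  rfl

section Pair

variable {ν₁ ν₂ : Measure ℝ} [IsFiniteMeasure ν₁] [IsFiniteMeasure ν₂] {φ₁ φ₂ : ℝ → ℂ} {δ : ℝ}

theorem ae_tendsto_cauchyTransform_zero (hφ₁ : Integrable φ₁ ν₁) (hφ₁m : Measurable φ₁)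
    (hφ₂ : Integrable φ₂ ν₂) (hφ₂m : Measurable φ₂) (hδ : δ ≠ 0)
    (hF : ∀ z : ℂ, z.im ≠ 0 →
      cauchyTransform ν₂ 1 z * (1 + δ * cauchyTransform ν₁ 1 z) = cauchyTransform ν₁ 1 z)
    (hK : ∀ z : ℂ, z.im ≠ 0 →
      cauchyTransform ν₂ φ₂ z * (1 + δ * cauchyTransform ν₁ 1 z) = cauchyTransform ν₁ φ₁ z) :
    ∀ᵐ x : ℝ, x ∈ acZeroSet ν₁ φ₁ ∩ acZeroSet ν₂ φ₂ →
      Tendsto (cauchyTransform ν₁ φ₁) (𝓝[stolzAngle x] (x : ℂ)) (𝓝 0) := by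
  filter_upwards [ae_exists_eventually_im_cauchyTransform_one_le ν₁,
    ae_exists_eventually_le_im_cauchyTransform_one ν₁,
    ae_exists_eventually_le_im_cauchyTransform_one ν₂,
    ae_tendsto_cauchyTransform_sub_conj hφ₁ hφ₁m, ae_tendsto_cauchyTransform_sub_conj hφ₂ hφ₂m]
    with x hC₁ hc₁ hc₂ hjump₁ hjump₂ ⟨⟨hx₁, hφ₁x⟩, ⟨hx₂, hφ₂x⟩⟩
  obtain ⟨C₁, hC₁⟩ := hC₁
  obtain ⟨c₁, hc₁0, hc₁⟩ := hc₁ hx₁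
  obtain ⟨c₂, hc₂0, hc₂⟩ := hc₂ hx₂
  have him : ∀ᶠ z in 𝓝[stolzAngle x] (x : ℂ), z.im ≠ 0 :=
    eventually_mem_nhdsWithin.mono fun z hz => hz.1.ne'
  have hbound : ∀ᶠ z in 𝓝[stolzAngle x] (x : ℂ), ‖1 + δ * cauchyTransform ν₁ 1 z‖ ≤ √(C₁ / c₂) := by
    filter_upwards [him, hC₁, hc₂] with z hz hC₁ hc₂
      using norm_one_add_le_sqrt_div (hF z hz) hc₂0 hC₁ hc₂
  refine tendsto_zero_of_tendsto_sub_zero (him.mono hK) (him.mono fun z hz => ?_)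
    (mul_pos (abs_pos.2 hδ) hc₁0) (hc₁.mono fun z hz => ?_) hbound (hjump₁ hφ₁x) (hjump₂ hφ₂x)
  · have hconj := cauchyTransform_conj ν₁ 1 (conj z)
    simp only [Pi.one_apply, map_one, conj_conj, ← Pi.one_def] at hconj
    simpa only [map_add, map_one, map_mul, conj_ofReal, hconj] using hK (conj z) (by simpa using hz)
  · simp only [add_im, one_im, im_ofReal_mul, zero_add, abs_mul]
    gcongr
    exact hz.trans (le_abs_self _)

theorem ae_eq_zero_of_volume_inter_acZeroSet_ne_zero (hφ₁ : Integrable φ₁ ν₁)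
    (hφ₁m : Measurable φ₁) (hφ₂ : Integrable φ₂ ν₂) (hφ₂m : Measurable φ₂) (hδ : δ ≠ 0)
    (hF : ∀ z : ℂ, z.im ≠ 0 →
      cauchyTransform ν₂ 1 z * (1 + δ * cauchyTransform ν₁ 1 z) = cauchyTransform ν₁ 1 z)
    (hK : ∀ z : ℂ, z.im ≠ 0 →
      cauchyTransform ν₂ φ₂ z * (1 + δ * cauchyTransform ν₁ 1 z) = cauchyTransform ν₁ φ₁ z)
    (hpos : volume (acZeroSet ν₁ φ₁ ∩ acZeroSet ν₂ φ₂) ≠ 0) : φ₁ =ᵐ[ν₁] 0 := by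
  set E := {x : ℝ | Tendsto (cauchyTransform ν₁ φ₁) (𝓝[stolzAngle x] (x : ℂ)) (𝓝 0) ∧
    Tendsto (fun z => cauchyTransform ν₁ φ₁ z - cauchyTransform ν₁ φ₁ (conj z))
      (𝓝[stolzAngle x] (x : ℂ)) (𝓝 0)}
  have hsub : (acZeroSet ν₁ φ₁ ∩ acZeroSet ν₂ φ₂ : Set ℝ) ≤ᵐ[volume] E := by
    filter_upwards [ae_tendsto_cauchyTransform_zero hφ₁ hφ₁m hφ₂ hφ₂m hδ hF hK,
      ae_tendsto_cauchyTransform_sub_conj hφ₁ hφ₁m] with x hzero hjump hx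
      using ⟨hzero hx, hjump hx.1.2⟩
  refine ae_eq_zero_of_tendsto_cauchyTransform hφ₁ (E := E)
    (fun h => hpos (measure_mono_null_ae hsub h)) (fun x hx => hx.1) fun x hx => ?_
  simpa only [sub_sub_cancel, sub_zero] using hx.1.sub hx.2

end Pair

/-! ### Spectral representations and rank-one perturbations -/

section SpectralRepresentation

variable {E : Type*} [NormedAddCommGroup E] [InnerProductSpace ℂ E]

/-- `V` is the spectral representation of the (possibly unbounded) operator `T` with cyclic vector
`φ`: it carries `T` to multiplication by the independent variable on its maximal domain in `L²(ν)`,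
and `φ` to the constant function one. In particular `ν` is the spectral measure of `φ`. -/
structure IsSpectralRepresentation {ν : Measure ℝ} (T : E →ₗ.[ℂ] E) (φ : E)
    (V : E ≃ₗᵢ[ℂ] Lp ℂ 2 ν) : Prop where
  mem_domain {g : E} : MemLp (fun t : ℝ => t * V g t) 2 ν → g ∈ T.domain
  map_apply (g : T.domain) : V (T g) =ᵐ[ν] fun t : ℝ => t * V g t
  map_cyclic : V φ =ᵐ[ν] 1

/-- The perturbation `T + α ⟪φ, ·⟫ φ` of `T`, with the same domain as `T`. -/
noncomputable def rankOnePerturbation (T : E →ₗ.[ℂ] E) (φ : E) (α : ℝ) : E →ₗ.[ℂ] E :=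
  (α : ℂ) • (InnerProductSpace.rankOne ℂ φ φ).toLinearMap +ᵥ T

lemma rankOnePerturbation_apply (T : E →ₗ.[ℂ] E) (φ : E) (α : ℝ) (g : T.domain) :
    rankOnePerturbation T φ α g = (α * ⟪φ, (g : E)⟫) • φ + T g := by
  rw [mul_smul]
  rfl

lemma rankOnePerturbation_add (T : E →ₗ.[ℂ] E) (φ : E) (α β : ℝ) :
    rankOnePerturbation T φ (α + β) = rankOnePerturbation (rankOnePerturbation T φ β) φ α := by
  rw [rankOnePerturbation, rankOnePerturbation, rankOnePerturbation, vadd_vadd, ← add_smul,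
    ofReal_add]

lemma memLp_mul_inv_ofReal_sub {ν : Measure ℝ} {p : ℝ≥0∞} {h : ℝ → ℂ} (hh : MemLp h p ν) {z : ℂ}
    (hz : z.im ≠ 0) : MemLp (fun t : ℝ => h t * ((t : ℂ) - z)⁻¹) p ν := by
  refine MemLp.of_le_mul (c := |z.im|⁻¹) hh
    (hh.1.mul (continuous_inv_ofReal_sub hz).aestronglyMeasurable) (ae_of_all _ fun t => ?_)
  rw [norm_mul, mul_comm]
  gcongr
  exact norm_inv_ofReal_sub_le hz t

namespace IsSpectralRepresentation

variable {ν ν' : Measure ℝ} {T : E →ₗ.[ℂ] E} {φ : E} {V : E ≃ₗᵢ[ℂ] Lp ℂ 2 ν}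
  {V' : E ≃ₗᵢ[ℂ] Lp ℂ 2 ν'}

lemma isFiniteMeasure (h : IsSpectralRepresentation T φ V) : IsFiniteMeasure ν := by
  have hone : MemLp (fun _ : ℝ => (1 : ℂ)) 2 ν := (Lp.memLp (V φ)).ae_eq h.map_cyclic
  exact ⟨((memLp_const_iff two_ne_zero ENNReal.ofNat_ne_top).1 hone).resolve_left one_ne_zero⟩

lemma integrable_map (h : IsSpectralRepresentation T φ V) (f : E) : Integrable (V f) ν :=
  have := h.isFiniteMeasure
  (Lp.memLp (V f)).integrable one_le_two

lemma exists_sub_smul_eq (h : IsSpectralRepresentation T φ V) (f : E) {z : ℂ} (hz : z.im ≠ 0) :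
    ∃ g : T.domain, T g - z • (g : E) = f := by
  have hG := memLp_mul_inv_ofReal_sub (Lp.memLp (V f)) hz
  set g := V.symm hG.toLp with hg
  have hVg : V g =ᵐ[ν] fun t : ℝ => V f t * ((t : ℂ) - z)⁻¹ := by
    rw [hg, LinearIsometryEquiv.apply_symm_apply]
    exact hG.coeFn_toLp
  have hmul : (fun t : ℝ => t * V g t) =ᵐ[ν] V (f + z • g) := by
    rw [map_add, map_smul]
    filter_upwards [hVg, Lp.coeFn_add (V f) (z • V g), Lp.coeFn_smul z (V g)] with t hVg hadd hsmul
    have := ofReal_sub_ne_zero t hz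
    rw [hadd, Pi.add_apply, hsmul, Pi.smul_apply, smul_eq_mul, hVg]
    field_simp
    ring
  have hdom : g ∈ T.domain := h.mem_domain ((Lp.memLp _).ae_eq hmul.symm)
  refine ⟨⟨g, hdom⟩, sub_eq_iff_eq_add.2 (V.injective (Lp.ext ?_))⟩
  exact (h.map_apply ⟨g, hdom⟩).trans hmul

lemma inner_eq_cauchyTransform (h : IsSpectralRepresentation T φ V) {z : ℂ} (hz : z.im ≠ 0)
    (g : T.domain) : ⟪φ, (g : E)⟫ = cauchyTransform ν (V (T g - z • (g : E))) z := by
  rw [← V.inner_map_map, L2.inner_def, cauchyTransform]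
  refine integral_congr_ae ?_
  rw [map_sub, map_smul]
  filter_upwards [h.map_cyclic, h.map_apply g, Lp.coeFn_sub (V (T g)) (z • V g),
    Lp.coeFn_smul z (V (g : E))] with t hφ hT hsub hsmul
  have := ofReal_sub_ne_zero t hz
  rw [hφ, hsub, Pi.sub_apply, hsmul, Pi.smul_apply, hT, smul_eq_mul, ← sub_mul, Pi.one_apply,
    RCLike.inner_apply, map_one, mul_one]
  field_simp

lemma cauchyTransform_map_cyclic (h : IsSpectralRepresentation T φ V) (z : ℂ) :
    cauchyTransform ν (V φ) z = cauchyTransform ν 1 z :=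
  cauchyTransform_congr h.map_cyclic z

lemma cauchyTransform_map_add_smul_cyclic (h : IsSpectralRepresentation T φ V) (f : E) (c : ℂ)
    {z : ℂ} (hz : z.im ≠ 0) :
    cauchyTransform ν (V (f + c • φ)) z =
      cauchyTransform ν (V f) z + c * cauchyTransform ν 1 z := by
  have hadd : V (f + c • φ) =ᵐ[ν] fun t => V f t + c * V φ t := by
    rw [map_add, map_smul]
    filter_upwards [Lp.coeFn_add (V f) (c • V φ), Lp.coeFn_smul c (V φ)] with t hadd hsmul
    rw [hadd, Pi.add_apply, hsmul, Pi.smul_apply, smul_eq_mul]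
  rw [cauchyTransform_congr hadd, cauchyTransform_add (h.integrable_map f)
    ((h.integrable_map φ).const_mul c) hz, cauchyTransform_const_mul, h.cauchyTransform_map_cyclic]

theorem cauchyTransform_rankOnePerturbation {δ : ℝ} (h : IsSpectralRepresentation T φ V)
    (h' : IsSpectralRepresentation (rankOnePerturbation T φ δ) φ V') (f : E) {z : ℂ}
    (hz : z.im ≠ 0) :
    cauchyTransform ν' (V' f) z * (1 + δ * cauchyTransform ν 1 z) = cauchyTransform ν (V f) z := by
  obtain ⟨k, hk⟩ := h'.exists_sub_smul_eq f hz
  have hinner' : ⟪φ, (k : E)⟫ = cauchyTransform ν' (V' f) z := by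
    rw [h'.inner_eq_cauchyTransform hz k, hk]
  have hk' : T k - z • (k : E) = f + (-(δ * ⟪φ, (k : E)⟫)) • φ := by
    rw [← hk, rankOnePerturbation_apply T φ δ k]
    module
  have hinner := h.inner_eq_cauchyTransform hz k
  rw [hk', h.cauchyTransform_map_add_smul_cyclic f _ hz, hinner'] at hinner
  linear_combination hinner

/-- The Aronszajn-Krein formula. -/
theorem cauchyTransform_one_rankOnePerturbation {δ : ℝ} (h : IsSpectralRepresentation T φ V)
    (h' : IsSpectralRepresentation (rankOnePerturbation T φ δ) φ V') {z : ℂ} (hz : z.im ≠ 0) :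
    cauchyTransform ν' 1 z * (1 + δ * cauchyTransform ν 1 z) = cauchyTransform ν 1 z := by
  have hφ := h.cauchyTransform_rankOnePerturbation h' φ hz
  rwa [h.cauchyTransform_map_cyclic, h'.cauchyTransform_map_cyclic] at hφ

theorem aedisjoint_acZeroSet {δ : ℝ} (hδ : δ ≠ 0) (h : IsSpectralRepresentation T φ V)
    (h' : IsSpectralRepresentation (rankOnePerturbation T φ δ) φ V') {f : E} (hf : f ≠ 0) :
    AEDisjoint volume (acZeroSet ν (V f)) (acZeroSet ν' (V' f)) := by
  have := h.isFiniteMeasure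
  have := h'.isFiniteMeasure
  refine by_contra fun hpos => hf (V.map_eq_zero_iff.1 (Lp.eq_zero_iff_ae_eq_zero.2 ?_))
  exact ae_eq_zero_of_volume_inter_acZeroSet_ne_zero (h.integrable_map f)
    (Lp.stronglyMeasurable _).measurable (h'.integrable_map f) (Lp.stronglyMeasurable _).measurable
    hδ (fun z hz => h.cauchyTransform_one_rankOnePerturbation h' hz)
    (fun z hz => h.cauchyTransform_rankOnePerturbation h' f hz) hpos

lemma of_continuousLinearMap {B : E →L[ℂ] E} (hB : ∀ g, V (B g) =ᵐ[ν] fun t : ℝ => t * V g t)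
    (hφ : V φ =ᵐ[ν] 1) : IsSpectralRepresentation ((B : E →ₗ[ℂ] E).toPMap ⊤) φ V where
  mem_domain _ := Submodule.mem_top
  map_apply g := hB g
  map_cyclic := hφ

end IsSpectralRepresentation

lemma rankOnePerturbation_toPMap_top (B : E →L[ℂ] E) (φ : E) (α : ℝ) :
    rankOnePerturbation ((B : E →ₗ[ℂ] E).toPMap ⊤) φ α =
      ((B + (α : ℂ) • InnerProductSpace.rankOne ℂ φ φ : E →L[ℂ] E) : E →ₗ[ℂ] E).toPMap ⊤ :=
  LinearPMap.ext' (LinearMap.ext fun _ => add_comm _ _)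

end SpectralRepresentation

lemma eq_add_smul_rankOne_of_ae {μ : Measure ℝ} {one : Lp ℂ 2 μ} (hone : one =ᵐ[μ] 1)
    {B₀ B : Lp ℂ 2 μ →L[ℂ] Lp ℂ 2 μ} {α : ℂ}
    (hB : ∀ g : Lp ℂ 2 μ, B g =ᵐ[μ] fun t => B₀ g t + α * ⟪one, g⟫) :
    B = B₀ + α • InnerProductSpace.rankOne ℂ one one := by
  ext1 g
  rw [add_apply, smul_apply, InnerProductSpace.rankOne_apply, smul_smul]
  refine Lp.ext ?_
  filter_upwards [hB g, hone, Lp.coeFn_add (B₀ g) ((α * ⟪one, g⟫) • one),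
    Lp.coeFn_smul (α * ⟪one, g⟫) one] with t hB hone hadd hsmul
  rw [hB, hadd, Pi.add_apply, hsmul, Pi.smul_apply, hone, Pi.one_apply, smul_eq_mul, mul_one]

end

theorem cyclic_ac_part_all_but_countably_many_general {E : Type*} [NormedAddCommGroup E]
    [InnerProductSpace ℂ E] {T : E →ₗ.[ℂ] E} {φ : E} {ν : ℝ → Measure ℝ}
    {V : ∀ α : ℝ, E ≃ₗᵢ[ℂ] Lp ℂ 2 (ν α)}
    (hV : ∀ α, IsSpectralRepresentation (rankOnePerturbation T φ α) φ (V α))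
    {f : E} (hf : f ≠ 0) :
    {α : ℝ | 0 < (volume.withDensity ((ν α).rnDeriv volume)) {t | V α f t = 0}}.Countable := by
  simp only [withDensity_rnDeriv_pos_iff]
  refine Measure.countable_meas_pos_of_disjoint_iUnion₀ (fun α =>
    (measurableSet_acZeroSet _ (Lp.stronglyMeasurable _).measurable).nullMeasurableSet) ?_
  intro α β hαβ
  refine (hV α).aedisjoint_acZeroSet (sub_ne_zero.2 hαβ.symm) ?_ hf
  rw [← rankOnePerturbation_add, sub_add_cancel]
  exact hV β

/-- **Theorem (rank-one perturbations, absolutely continuous part).**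
Let `μ` be a finite compactly supported positive Borel measure on `ℝ`, let
`A α = M_t + α(·,1)1` on `L²(μ)`, let `μm α` be the spectral measure of `A α`
with respect to the constant function `one = 1` (characterized by the resolvent
identity `hres`), and let `V α : L²(μ) → L²(μ_α)` be the spectral representation
(`V α ∘ A α = M_t ∘ V α`, `V α 1 = 1`).  Then for any `0 ≠ f ∈ L²(μ)`, the set of
`α ∈ ℝ` for which `V α f` vanishes on a set of positive `(μ_α)_ac`-measure is
countable. -/
theorem cyclic_ac_part_all_but_countably_many
    {μ : Measure ℝ} [IsFiniteMeasure μ]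
    (hsupp : ∃ K : Set ℝ, IsCompact K ∧ μ Kᶜ = 0)
    (one : Lp ℂ 2 μ) (hone : (one : ℝ → ℂ) =ᵐ[μ] fun _ => 1)
    (A : ℝ → (Lp ℂ 2 μ →L[ℂ] Lp ℂ 2 μ))
    (hA : ∀ (α : ℝ) (g : Lp ℂ 2 μ),
      (A α g : ℝ → ℂ) =ᵐ[μ] fun t => t * g t + (α : ℂ) * ⟪one, g⟫)
    (μm : ℝ → Measure ℝ)
    (hμm_fin : ∀ α, IsFiniteMeasure (μm α))
    (hμm0 : μm 0 = μ)
    (hres : ∀ (α : ℝ) (z : ℂ), z.im ≠ 0 → ∀ g : Lp ℂ 2 μ,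
      A α g - z • g = one → ⟪one, g⟫ = ∫ t, ((t : ℂ) - z)⁻¹ ∂(μm α))
    (V : ∀ α : ℝ, Lp ℂ 2 μ ≃ₗᵢ[ℂ] Lp ℂ 2 (μm α))
    (hV : ∀ (α : ℝ) (g : Lp ℂ 2 μ),
      (V α (A α g) : ℝ → ℂ) =ᵐ[μm α] fun t => t * (V α g) t)
    (hV1 : ∀ α : ℝ, (V α one : ℝ → ℂ) =ᵐ[μm α] fun _ => 1)
    (f : Lp ℂ 2 μ) (hf : f ≠ 0) :
    Set.Countable {α : ℝ |
      0 < (volume.withDensity ((μm α).rnDeriv volume))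
        {t : ℝ | (V α f : ℝ → ℂ) t = 0}} := by
  have hperturb (α : ℝ) :
      A α = A 0 + (α : ℂ) • InnerProductSpace.rankOne ℂ one one := by
    refine eq_add_smul_rankOne_of_ae hone fun g => ?_
    filter_upwards [hA α g, hA 0 g] with t hα h0
    rw [hα, h0, ofReal_zero, zero_mul, add_zero]
  refine cyclic_ac_part_all_but_countably_many_general
    (T := (A 0 : Lp ℂ 2 μ →ₗ[ℂ] Lp ℂ 2 μ).toPMap ⊤) (φ := one) (fun α => ?_) hf
  rw [rankOnePerturbation_toPMap_top, ← hperturb]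
  exact .of_continuousLinearMap (hV α) (hV1 α)
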